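/- arXiv:2512.05376 — 2 statements merged into one kernel-verified Lean document; each statement's English description precedes it below -/
import Mathlib

section
/- Fix an integer k ≥ 4, and let G be a connected finite simple graph such that every connected induced subgraph of G with exactly k vertices is a path or a cycle. Then G itself is a path or a cycle. -/
/-!
A vertex with three neighbours, together with these neighbours, spans a connected induced subgraph
on four vertices, which grows one vertex at a time to a connected induced subgraph on `k ≥ 4`
vertices. That subgraph has a vertex of degree at least three, so it is neither a path nor a cycle.
Hence all degrees of `G` are at most two. A subgraph of a connected graph containing all edges at
each of its vertices is everything: if `G` contains a cycle this applies to the cycle, and if `G` is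
acyclic it applies to a longest path.
-/

section

open SimpleGraph

variable {V W : Type*} {G : SimpleGraph V} {H : SimpleGraph W}

/-- `G` is a path graph (`pathGraph n`, including the degenerate `n ≤ 2`) or a cycle graph on at
least three vertices, up to isomorphism. -/
def IsPathOrCycle (G : SimpleGraph V) : Prop :=
  (∃ n : ℕ, Nonempty (G ≃g pathGraph n)) ∨ ∃ n : ℕ, 3 ≤ n ∧ Nonempty (G ≃g cycleGraph n)

lemma encard_neighborSet_cycleGraph_le_two : ∀ {n : ℕ} (i : Fin n),
    ((cycleGraph n).neighborSet i).encard ≤ 2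
  | 1, _ => (Set.encard_le_one_iff_subsingleton.2 Set.subsingleton_of_subsingleton).trans
      one_le_two
  | _ + 2, _ => cycleGraph_neighborSet ▸
      (Set.encard_insert_le _ _).trans_eq (by rw [Set.encard_singleton, one_add_one_eq_two])

lemma encard_neighborSet_pathGraph_le_two {n : ℕ} (i : Fin n) :
    ((pathGraph n).neighborSet i).encard ≤ 2 :=
  (Set.encard_le_encard fun _ h ↦ pathGraph_le_cycleGraph h).trans
    (encard_neighborSet_cycleGraph_le_two i)

lemma encard_neighborSet_cycleGraph {n : ℕ} (hn : 3 ≤ n) (i : Fin n) :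
    ((cycleGraph n).neighborSet i).encard = 2 := by
  obtain ⟨m, rfl⟩ := Nat.exists_eq_add_of_le' hn
  rw [← coe_neighborFinset, Set.encard_coe_eq_coe_finsetCard, card_neighborFinset_eq_degree,
    cycleGraph_degree_three_le, Nat.cast_ofNat]

lemma IsPathOrCycle.encard_neighborSet_le_two (h : IsPathOrCycle G) (v : V) :
    (G.neighborSet v).encard ≤ 2 := by
  rcases h with ⟨n, ⟨e⟩⟩ | ⟨n, -, ⟨e⟩⟩
  · exact (Set.encard_congr (e.mapNeighborSet v)).trans_le (encard_neighborSet_pathGraph_le_two _)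
  · exact (Set.encard_congr (e.mapNeighborSet v)).trans_le (encard_neighborSet_cycleGraph_le_two _)

lemma exists_adj_mem_notMem (hG : G.Preconnected) {s : Set V} (hs : s.Nonempty)
    (hs' : s ≠ Set.univ) : ∃ a ∈ s, ∃ b ∉ s, G.Adj a b := by
  obtain ⟨u, hu⟩ := hs
  obtain ⟨w, hw⟩ := (Set.ne_univ_iff_exists_notMem s).1 hs'
  obtain ⟨p⟩ := hG u w
  obtain ⟨d, -, hfst, hsnd⟩ := p.exists_boundary_dart s hu hw
  exact ⟨d.fst, hfst, d.snd, hsnd, d.adj⟩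

lemma connected_induce_insert {s : Set V} {a b : V} (hs : (G.induce s).Preconnected) (ha : a ∈ s)
    (hab : G.Adj a b) : (G.induce (insert b s)).Connected := by
  rw [← Set.union_singleton]
  exact connected_induce_union hs .of_subsingleton ha (Set.mem_singleton b) hab

lemma connected_induce_insert_of_subset_neighborSet {s : Set V} {v : V}
    (hs : s ⊆ G.neighborSet v) : (G.induce (insert v s)).Connected :=
  .of_isUniversal (v := ⟨v, Set.mem_insert v s⟩) fun w hw ↦
    hs (w.2.resolve_left fun h ↦ hw (Subtype.ext h.symm))

lemma exists_superset_card_eq_connected_induce (hG : G.Preconnected) {s : Finset V}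
    (hs : (G.induce (s : Set V)).Connected) {k : ℕ} (hsk : s.card ≤ k)
    (hk : (k : ℕ∞) ≤ ENat.card V) :
    ∃ t : Finset V, s ⊆ t ∧ t.card = k ∧ (G.induce (t : Set V)).Connected := by
  classical
  induction k, hsk using Nat.le_induction with
  | base => exact ⟨s, subset_rfl, rfl, hs⟩
  | succ k _ ih =>
    obtain ⟨t, hst, rfl, ht⟩ := ih (le_trans (by simp) hk)
    have ht_ne : (t : Set V) ≠ Set.univ := by
      intro h
      rw [← Set.encard_univ, ← h, Set.encard_coe_eq_coe_finsetCard, Nat.cast_le] at hk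
      exact Nat.not_succ_le_self _ hk
    obtain ⟨a, ha, b, hb, hab⟩ :=
      exists_adj_mem_notMem hG (Set.nonempty_coe_sort.1 ht.nonempty) ht_ne
    refine ⟨insert b t, hst.trans (Finset.subset_insert b t), Finset.card_insert_of_notMem hb, ?_⟩
    rw [Finset.coe_insert]
    exact connected_induce_insert ht.preconnected ha hab

lemma encard_le_encard_neighborSet_induce {s t : Set V} {v : V} (hv : v ∈ s) (hts : t ⊆ s)
    (ht : t ⊆ G.neighborSet v) : t.encard ≤ ((G.induce s).neighborSet ⟨v, hv⟩).encard := by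
  rw [← Subtype.val_injective.encard_image]
  exact Set.encard_le_encard fun w hw ↦ ⟨⟨w, hts hw⟩, ht hw, rfl⟩

lemma encard_neighborSet_le_of_forall_connected_induce (hG : G.Preconnected) {d k : ℕ}
    (hdk : d + 2 ≤ k) (hk : (k : ℕ∞) ≤ ENat.card V)
    (h : ∀ s : Finset V, s.card = k → (G.induce (s : Set V)).Connected →
      ∀ v, ((G.induce (s : Set V)).neighborSet v).encard ≤ d) (v : V) :
    (G.neighborSet v).encard ≤ d := by
  classical
  by_contra! hd
  obtain ⟨t, ht, htd⟩ := Set.exists_subset_encard_eq (Order.add_one_le_of_lt hd)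
  lift t to Finset V using Set.finite_of_encard_eq_coe (k := d + 1) (mod_cast htd)
  have hcard : (insert v t).card ≤ k := by
    rw [Set.encard_coe_eq_coe_finsetCard] at htd
    have : t.card = d + 1 := mod_cast htd
    grind [Finset.card_insert_le v t]
  have hstar : (G.induce (insert v t : Finset V)).Connected := by
    rw [Finset.coe_insert]
    exact connected_induce_insert_of_subset_neighborSet ht
  obtain ⟨s, hts, hsk, hs⟩ := exists_superset_card_eq_connected_induce hG hstar hcard hk
  obtain ⟨hvs, hts⟩ := Finset.insert_subset_iff.1 hts
  have hle := (encard_le_encard_neighborSet_induce hvs (mod_cast hts) ht).trans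
    (h s hsk hs ⟨v, hvs⟩)
  rw [htd] at hle
  exact Nat.not_succ_le_self d (mod_cast hle)

lemma subgraph_eq_top_of_neighborSet_subset (hG : G.Preconnected) {K : G.Subgraph}
    (hK : K.verts.Nonempty) (h : ∀ v ∈ K.verts, G.neighborSet v ⊆ K.neighborSet v) : K = ⊤ := by
  have hverts : K.verts = Set.univ := by
    by_contra hne
    obtain ⟨a, ha, b, hb, hab⟩ := exists_adj_mem_notMem hG hK hne
    exact hb (K.edge_vert (h a ha hab).symm)
  exact top_unique ⟨hverts.ge, fun a _ hab ↦ h a (hverts ▸ Set.mem_univ a) hab⟩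

lemma nonempty_iso_of_copy_of_encard_neighborSet_le (hG : G.Preconnected) [Nonempty W]
    (f : Copy H G) (hfin : ∀ w, (H.neighborSet w).Finite)
    (h : ∀ w, (G.neighborSet (f w)).encard ≤ (H.neighborSet w).encard) : Nonempty (G ≃g H) := by
  have himage (w : W) : f '' H.neighborSet w = G.neighborSet (f w) :=
    ((hfin w).image f).eq_of_subset_of_encard_le (Set.image_subset_iff.2 fun _ ↦ f.toHom.map_adj)
      ((h w).trans (f.injective.encard_image _).ge)
  have htop : f.toSubgraph = ⊤ := by
    refine subgraph_eq_top_of_neighborSet_subset hG ((Set.image_nonempty).2 Set.univ_nonempty) ?_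
    rintro _ ⟨w, -, rfl⟩
    exact (himage w).ge.trans (Set.image_subset_iff.2 fun x hx ↦ ⟨w, x, hx, rfl, rfl⟩)
  have e := f.isoToSubgraph
  rw [htop] at e
  exact ⟨(e.trans Subgraph.topIso).symm⟩

lemma nonempty_iso_cycleGraph_of_isContained (hG : G.Preconnected)
    (hdeg : ∀ v, (G.neighborSet v).encard ≤ 2) {n : ℕ} (hn : 3 ≤ n) (h : cycleGraph n ⊑ G) :
    Nonempty (G ≃g cycleGraph n) := by
  obtain ⟨f⟩ := h
  have : Nonempty (Fin n) := ⟨⟨0, by omega⟩⟩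
  refine nonempty_iso_of_copy_of_encard_neighborSet_le hG f (fun _ ↦ Set.toFinite _) fun i ↦ ?_
  rw [encard_neighborSet_cycleGraph hn]
  exact hdeg (f i)

lemma toSubgraph_adj_start_of_forall_length_le (hG : G.IsAcyclic) {u v w : V} {p : G.Walk u v}
    (hp : p.IsPath) (hmax : ∀ (u' : V) (q : G.Walk u' v), q.IsPath → q.length ≤ p.length)
    (huw : G.Adj u w) : p.toSubgraph.Adj u w := by
  have hw : w ∈ p.support := by
    by_contra hw
    have := hmax w (.cons huw.symm p) (hp.cons hw)
    rw [Walk.length_cons] at this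
    omega
  have hnil : ¬ p.Nil := fun h ↦ huw.ne' (List.mem_singleton.1 (Walk.nil_iff_support_eq.1 h ▸ hw))
  rw [hG.eq_snd_of_adj_start hp huw hw]
  exact p.toSubgraph_adj_snd hnil

lemma neighborSet_subset_neighborSet_toSubgraph_internal {u v : V} {p : G.Walk u v}
    (hp : p.IsPath) {i : ℕ} (hi : i ≠ 0) (hi' : i < p.length)
    (hdeg : (G.neighborSet (p.getVert i)).encard ≤ 2) :
    G.neighborSet (p.getVert i) ⊆ p.toSubgraph.neighborSet (p.getVert i) := by
  have hfin : (p.toSubgraph.neighborSet (p.getVert i)).Finite := p.finite_neighborSet_toSubgraph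
  have htwo : (p.toSubgraph.neighborSet (p.getVert i)).encard = 2 := by
    rw [← hfin.cast_ncard_eq, hp.ncard_neighborSet_toSubgraph_internal_eq_two hi hi',
      Nat.cast_ofNat]
  exact (hfin.eq_of_subset_of_encard_le (Subgraph.neighborSet_subset _ _) (htwo ▸ hdeg)).ge

lemma exists_isPath_toSubgraph_eq_top [Finite V] (hG : G.IsTree)
    (hdeg : ∀ v, (G.neighborSet v).encard ≤ 2) :
    ∃ (u v : V) (p : G.Walk u v), p.IsPath ∧ p.toSubgraph = ⊤ := by
  have := hG.connected.nonempty
  obtain ⟨u, v, p, hp, hmax⟩ := Walk.exists_isPath_forall_isPath_length_le_length G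
  refine ⟨u, v, p, hp, subgraph_eq_top_of_neighborSet_subset hG.connected.preconnected
    ⟨u, p.start_mem_verts_toSubgraph⟩ fun x hx ↦ ?_⟩
  obtain ⟨i, rfl, hi⟩ := Walk.mem_support_iff_exists_getVert.1 (p.mem_verts_toSubgraph.1 hx)
  rcases eq_or_ne i 0 with rfl | hi₀
  · rw [p.getVert_zero]
    exact fun w hw ↦ toSubgraph_adj_start_of_forall_length_le hG.isAcyclic hp (hmax · v) hw
  rcases hi.eq_or_lt with rfl | hlt
  · rw [p.getVert_length, ← p.toSubgraph_reverse]
    exact fun w hw ↦ toSubgraph_adj_start_of_forall_length_le hG.isAcyclic hp.reverse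
      (by simpa only [Walk.length_reverse] using (hmax · u)) hw
  · exact neighborSet_subset_neighborSet_toSubgraph_internal hp hi₀ hlt (hdeg _)

lemma exists_nonempty_iso_pathGraph [Finite V] (hG : G.IsTree)
    (hdeg : ∀ v, (G.neighborSet v).encard ≤ 2) : ∃ n : ℕ, Nonempty (G ≃g pathGraph n) := by
  classical
  obtain ⟨u, v, p, hp, htop⟩ := exists_isPath_toSubgraph_eq_top hG hdeg
  have e := hp.pathGraphIsoToSubgraph
  rw [htop] at e
  exact ⟨_, ⟨(e.trans Subgraph.topIso).symm⟩⟩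

theorem isPathOrCycle_of_encard_neighborSet_le_two [Finite V] (hG : G.Connected)
    (hdeg : ∀ v, (G.neighborSet v).encard ≤ 2) : IsPathOrCycle G := by
  by_cases hacyclic : G.IsAcyclic
  · exact .inl (exists_nonempty_iso_pathGraph ⟨hG, hacyclic⟩ hdeg)
  · simp only [isAcyclic_iff_free_cycleGraph, Free, not_forall, not_not] at hacyclic
    obtain ⟨n, hn, hcycle⟩ := hacyclic
    exact .inr ⟨n, hn, nonempty_iso_cycleGraph_of_isContained hG.preconnected hdeg hn hcycle⟩

end

/-- Fix `k ≥ 4`. If every connected induced subgraph with exactly `k` vertices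
of a connected graph `G` (with at least `k` vertices) is a path or a cycle, then `G` itself is a
path or a cycle. -/
theorem path_or_cycle_of_k_vertex_induced {V : Type*} [Fintype V] (G : SimpleGraph V)
    (hG : G.Connected) (k : ℕ) (hk : 4 ≤ k) (hkcard : k ≤ Fintype.card V)
    (hyp : ∀ s : Finset V, s.card = k → (G.induce (↑s : Set V)).Connected →
      (∃ n : ℕ, Nonempty ((G.induce (↑s : Set V)) ≃g SimpleGraph.pathGraph n)) ∨
        (∃ n : ℕ, 3 ≤ n ∧ Nonempty ((G.induce (↑s : Set V)) ≃g SimpleGraph.cycleGraph n))) :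
    (∃ n : ℕ, Nonempty (G ≃g SimpleGraph.pathGraph n)) ∨
      (∃ n : ℕ, 3 ≤ n ∧ Nonempty (G ≃g SimpleGraph.cycleGraph n)) := by
  have hdeg : ∀ v, (G.neighborSet v).encard ≤ (2 : ℕ) :=
    encard_neighborSet_le_of_forall_connected_induce hG.preconnected hk
      (by simpa only [ENat.card_eq_coe_fintype_card, Nat.cast_le] using hkcard)
      fun s hs hconn ↦ IsPathOrCycle.encard_neighborSet_le_two (hyp s hs hconn)
  exact isPathOrCycle_of_encard_neighborSet_le_two hG hdeg
end

section
/- Let G be a connected finite simple graph that is not a path graph. Then there exist at least three distinct vertices v of G such that G − v is connected. -/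
/-!
Given vertices `a` and `b`, the support of a geodesic from `a` to `b` induces a path graph. As `G`
is not a path graph, this support is a proper connected set of vertices. A proper connected set
can be enlarged by one adjacent vertex at a time until a single vertex is missing, and the missing
vertex is a non-cut vertex other than `a` and `b`. Taking for `a` and `b` non-cut vertices
already found produces a second and a third one.
-/

section

open SimpleGraph

variable {V : Type*} {G : SimpleGraph V}

section Geodesic

variable {u v : V} {p : G.Walk u v} {i j : ℕ}

lemma dist_getVert_of_length_eq_dist (hp : p.length = G.dist u v) (hi : i ≤ p.length) :
    G.dist u (p.getVert i) = i := by
  rw [← length_eq_dist_of_subwalk hp (p.isSubwalk_take i), Walk.take_length, min_eq_left hi]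

lemma adj_getVert_iff_of_length_eq_dist (hp : p.length = G.dist u v) (hi : i ≤ p.length)
    (hj : j ≤ p.length) :
    G.Adj (p.getVert i) (p.getVert j) ↔ i + 1 = j ∨ j + 1 = i := by
  constructor
  · intro hadj
    have hdist := hadj.diff_dist_adj (u := u)
    rw [dist_getVert_of_length_eq_dist hp hi, dist_getVert_of_length_eq_dist hp hj] at hdist
    have hij : i ≠ j := fun h ↦ hadj.ne (congrArg p.getVert h)
    lia
  · rintro (rfl | rfl)
    · exact p.adj_getVert_succ hj
    · exact (p.adj_getVert_succ hi).symm

/-- The embedding of a path graph as an induced subgraph of `G` given by a geodesic, that is, by a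
walk whose length is the distance between its endpoints. -/
def geodesicEmbedding (p : G.Walk u v) (hp : p.length = G.dist u v) :
    pathGraph (p.length + 1) ↪g G where
  toFun i := p.getVert i
  inj' i j hij := Fin.ext <|
    (p.isPath_of_length_eq_dist hp).getVert_injOn (Fin.is_le i) (Fin.is_le j) hij
  map_rel_iff' {i j} :=
    (adj_getVert_iff_of_length_eq_dist hp (Fin.is_le i) (Fin.is_le j)).trans pathGraph_adj.symm

lemma nonempty_iso_pathGraph_of_length_eq_dist (hp : p.length = G.dist u v)
    (hsupp : ∀ x, x ∈ p.support) : Nonempty (G ≃g pathGraph (p.length + 1)) := by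
  have hsurj : Function.Surjective (geodesicEmbedding p hp) := fun x ↦ by
    obtain ⟨i, hi, hle⟩ := Walk.mem_support_iff_exists_getVert.1 (hsupp x)
    exact ⟨⟨i, Nat.lt_succ_of_le hle⟩, hi⟩
  exact ⟨(RelIso.ofSurjective (geodesicEmbedding p hp) hsurj).symm⟩

end Geodesic

section NonCutVertex

variable {s : Set V}

lemma exists_mem_notMem_adj (hG : G.Preconnected) (hs : s.Nonempty) (hne : s ≠ Set.univ) :
    ∃ v ∈ s, ∃ w ∉ s, G.Adj v w := by
  obtain ⟨x, hx⟩ := hs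
  obtain ⟨y, hy⟩ := (Set.ne_univ_iff_exists_notMem s).1 hne
  obtain ⟨p⟩ := hG x y
  obtain ⟨d, -, hfst, hsnd⟩ := p.exists_boundary_dart s hx hy
  exact ⟨d.fst, hfst, d.snd, hsnd, d.adj⟩

lemma connected_induce_insert_s6 {v w : V} (hs : (G.induce s).Preconnected) (hv : v ∈ s)
    (hvw : G.Adj v w) : (G.induce (insert w s)).Connected := by
  rw [← Set.union_singleton]
  exact connected_induce_union hs .of_subsingleton hv (Set.mem_singleton w) hvw

lemma exists_notMem_connected_induce_compl_singleton (hG : G.Preconnected)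
    (hs : (G.induce s).Connected) (hfin : sᶜ.Finite) (hne : s ≠ Set.univ) :
    ∃ w ∉ s, (G.induce {w}ᶜ).Connected := by
  induction hcard : sᶜ.ncard using Nat.strong_induction_on generalizing s with
  | h n ih =>
    obtain ⟨v, hv, w, hw, hvw⟩ :=
      exists_mem_notMem_adj hG (Set.nonempty_coe_sort.1 hs.nonempty) hne
    by_cases huniv : insert w s = Set.univ
    · have hs_eq : s = {w}ᶜ := by
        rw [← Set.insert_sdiff_self_of_notMem hw, huniv, Set.compl_eq_univ_sdiff]
      exact ⟨w, hw, hs_eq ▸ hs⟩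
    · have hssub : (insert w s)ᶜ ⊂ sᶜ := compl_lt_compl_iff_lt.2 (Set.ssubset_insert hw)
      obtain ⟨x, hx, hconn⟩ := ih _ (hcard ▸ Set.ncard_lt_ncard hssub hfin)
        (connected_induce_insert_s6 hs.preconnected hv hvw) (hfin.subset hssub.subset) huniv rfl
      exact ⟨x, fun hxs ↦ hx (Set.mem_insert_of_mem w hxs), hconn⟩

lemma exists_ne_ne_connected_induce_compl_singleton [Finite V] (hG : G.Connected)
    (hpath : ¬ ∃ n : ℕ, Nonempty (G ≃g pathGraph n)) (a b : V) :
    ∃ w, w ≠ a ∧ w ≠ b ∧ (G.induce {w}ᶜ).Connected := by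
  obtain ⟨p, hp⟩ := hG.exists_walk_length_eq_dist a b
  have hproper : {x | x ∈ p.support} ≠ Set.univ := fun h ↦
    hpath ⟨_, nonempty_iso_pathGraph_of_length_eq_dist hp (Set.eq_univ_iff_forall.1 h)⟩
  obtain ⟨w, hw, hconn⟩ := exists_notMem_connected_induce_compl_singleton hG.preconnected
    p.connected_induce_support (Set.toFinite _) hproper
  exact ⟨w, fun h ↦ hw (h ▸ p.start_mem_support), fun h ↦ hw (h ▸ p.end_mem_support), hconn⟩

end NonCutVertex

end

/-- A connected finite simple graph which is not a path has at least three
distinct vertices whose removal leaves a connected graph. -/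
theorem three_noncut_vertices {V : Type*} [Fintype V] (G : SimpleGraph V)
    (hG : G.Connected) (hnp : ¬ ∃ n : ℕ, Nonempty (G ≃g SimpleGraph.pathGraph n)) :
    ∃ u v w : V, u ≠ v ∧ u ≠ w ∧ v ≠ w ∧
      (G.induce ({u}ᶜ : Set V)).Connected ∧
      (G.induce ({v}ᶜ : Set V)).Connected ∧
      (G.induce ({w}ᶜ : Set V)).Connected := by
  obtain ⟨x⟩ := hG.nonempty
  obtain ⟨u, -, -, hu⟩ := exists_ne_ne_connected_induce_compl_singleton hG hnp x x
  obtain ⟨v, hvu, -, hv⟩ := exists_ne_ne_connected_induce_compl_singleton hG hnp u u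
  obtain ⟨w, hwu, hwv, hw⟩ := exists_ne_ne_connected_induce_compl_singleton hG hnp u v
  exact ⟨u, v, w, hvu.symm, hwu.symm, hwv.symm, hu, hv, hw⟩
end
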